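/- Fix a real number Acc_AI with 1/2 < Acc_AI ≤ 1 and let S(t) denote the interval [1 − Acc_AI − t, 1 − Acc_AI + t] if 0 ≤ t ≤ 1 − Acc_AI, the interval [t + Acc_AI − 1, 1 − Acc_AI + t] if 1 − Acc_AI < t ≤ Acc_AI, and the interval [t + Acc_AI − 1, 1 + Acc_AI − t] if Acc_AI < t ≤ 1. Then for all A, x in [0, 1] one has x ∈ S(A) if and only if A ∈ S(x); that is, the correspondence between adherence level and attainable decision-making accuracy is its own inverse. -/

import Mathlib

theorem stmt_8 (AccAI : ℝ) (hAIlb : 1/2 < AccAI) (hAIub : AccAI ≤ 1)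
    (S : ℝ → Set ℝ)
    (hS : ∀ t : ℝ, S t =
      if t ≤ 1 - AccAI then Set.Icc (1 - AccAI - t) (1 - AccAI + t)
      else if t ≤ AccAI then Set.Icc (t + AccAI - 1) (1 - AccAI + t)
      else Set.Icc (t + AccAI - 1) (1 + AccAI - t)) :
    ∀ A x : ℝ, 0 ≤ A → A ≤ 1 → 0 ≤ x → x ≤ 1 →
      (x ∈ S A ↔ A ∈ S x) := by
  intro A x hA0 hA1 hx0 hx1
  rw [hS, hS]
  split_ifs <;> simp only [Set.mem_Icc] <;> constructor <;> rintro ⟨h1, h2⟩ <;>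
    constructor <;> linarith
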